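/- arXiv:0911.3529 — 3 statements merged into one kernel-verified Lean document; each statement's English description precedes it below -/
import Mathlib

section
/- Let K be a field and let (k_{11},…,k_{1m}), …, (k_{n1},…,k_{nm}) be n families of elements of K such that for any two distinct indices i ≠ j, the family (k_{i1},…,k_{im}) cannot be obtained from (k_{j1},…,k_{jm}) by a permutation (i.e. they define different multisets). Then there exist symmetric polynomials p_1,…,p_n in m variables over K such that the n×n matrix whose (i,j)-entry is p_i(k_{j1},…,k_{jm}) has nonzero determinant. -/
/-!
Symmetric polynomials separate multisets: the elementary symmetric functions of a family are,
by Vieta, the coefficients of the monic polynomial having the family as roots. Choose for each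
pair `i ≠ j` an elementary symmetric polynomial `e` taking different values at `k i` and `k j`;
the product over `j ≠ i` of the factors `e - e(k j)` vanishes at every `k j` with `j ≠ i` but not
at `k i`. With these Lagrange-type polynomials the evaluation matrix is diagonal with nonzero
diagonal entries.
-/

/-- Elementary symmetric polynomials separate the orbits of the permutation action on families. -/
lemma exists_perm_of_eval_esymm_eq {K : Type*} [Field K] {m : ℕ} (x y : Fin m → K)
    (h : ∀ d, MvPolynomial.eval x (MvPolynomial.esymm (Fin m) K d) =
      MvPolynomial.eval y (MvPolynomial.esymm (Fin m) K d)) :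
    ∃ σ : Equiv.Perm (Fin m), ∀ t, x t = y (σ t) := by
  have hesymm : ∀ d, (Finset.univ.val.map x).esymm d = (Finset.univ.val.map y).esymm d := by
    intro d
    have := h d
    rwa [← MvPolynomial.coe_aeval_eq_eval, ← MvPolynomial.coe_aeval_eq_eval, RingHom.coe_coe,
      RingHom.coe_coe, MvPolynomial.aeval_esymm_eq_multiset_esymm,
      MvPolynomial.aeval_esymm_eq_multiset_esymm] at this
  have hprod : ((Finset.univ.val.map x).map fun a => Polynomial.X - Polynomial.C a).prod =
      ((Finset.univ.val.map y).map fun a => Polynomial.X - Polynomial.C a).prod := by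
    rw [Multiset.prod_X_sub_X_eq_sum_esymm, Multiset.prod_X_sub_X_eq_sum_esymm]
    simp only [hesymm, Multiset.card_map]
  have hroots := congrArg Polynomial.roots hprod
  rw [Polynomial.roots_multiset_prod_X_sub_C, Polynomial.roots_multiset_prod_X_sub_C] at hroots
  classical
  -- Equal multisets have fibres of equal size, and bijections between fibres glue.
  have hfib : ∀ c, Nonempty ({t // x t = c} ≃ {t // y t = c}) := by
    intro c
    refine Fintype.card_eq.1 ?_
    have hc := congrArg (Multiset.count c) hroots
    rw [Multiset.count_map, Multiset.count_map] at hc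
    rw [Fintype.card_subtype, Fintype.card_subtype]
    simpa only [Finset.card_def, Finset.filter_val, eq_comm (a := c)] using hc
  exact ⟨Equiv.ofFiberEquiv fun c => (hfib c).some, fun t => (Equiv.ofFiberEquiv_map _ t).symm⟩

/-- If `n` families `k i : Fin m → K` are pairwise not related by a permutation, then
there exist symmetric polynomials `p₁,…,pₙ` in `m` variables whose evaluation matrix
`(pᵢ(kⱼ))` has nonzero determinant. -/
theorem stmt4 (K : Type*) [Field K] (m n : ℕ) (k : Fin n → Fin m → K)
    (hsep : ∀ i j : Fin n, i ≠ j →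
      ¬ ∃ σ : Equiv.Perm (Fin m), ∀ t, k i t = k j (σ t)) :
    ∃ p : Fin n → MvPolynomial (Fin m) K,
      (∀ i, (p i).IsSymmetric) ∧
      Matrix.det (Matrix.of fun i j : Fin n => MvPolynomial.eval (k j) (p i)) ≠ 0 := by
  have hd : ∀ i j : Fin n, ∃ d, i ≠ j →
      MvPolynomial.eval (k i) (MvPolynomial.esymm (Fin m) K d) ≠
        MvPolynomial.eval (k j) (MvPolynomial.esymm (Fin m) K d) := by
    intro i j
    by_contra! hcon
    exact hsep i j (hcon 0).1 (exists_perm_of_eval_esymm_eq _ _ fun d => (hcon d).2)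
  choose d hd using hd
  let p : Fin n → MvPolynomial (Fin m) K := fun i => ∏ j ∈ Finset.univ.erase i,
    (MvPolynomial.esymm (Fin m) K (d i j) -
      MvPolynomial.C (MvPolynomial.eval (k j) (MvPolynomial.esymm (Fin m) K (d i j))))
  refine ⟨p, fun i => ?_, ?_⟩
  · rw [← MvPolynomial.mem_symmetricSubalgebra]
    refine Subalgebra.prod_mem _ fun j _ => ?_
    rw [MvPolynomial.mem_symmetricSubalgebra]
    exact (MvPolynomial.esymm_isSymmetric _ _ _).sub (MvPolynomial.IsSymmetric.C _)
  · have hdiag : (Matrix.of fun i j : Fin n => MvPolynomial.eval (k j) (p i)) =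
        Matrix.diagonal fun i => MvPolynomial.eval (k i) (p i) := by
      ext i j
      by_cases hij : i = j
      · subst hij
        simp
      · rw [Matrix.diagonal_apply_ne _ hij, Matrix.of_apply, map_prod]
        exact Finset.prod_eq_zero (Finset.mem_erase.2 ⟨Ne.symm hij, Finset.mem_univ j⟩) (by simp)
    rw [hdiag, Matrix.det_diagonal, Finset.prod_ne_zero_iff]
    intro i _
    rw [map_prod, Finset.prod_ne_zero_iff]
    intro j hj
    rw [map_sub, MvPolynomial.eval_C, sub_ne_zero]
    exact hd i j (Finset.ne_of_mem_erase hj).symm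
end

section
/- Let K be a field and let (k_{11},…,k_{1m}), …, (k_{n1},…,k_{nm}) be n families of elements of K such that for any two distinct indices i ≠ j, the family (k_{i1},…,k_{im}) cannot be obtained from (k_{j1},…,k_{jm}) by a permutation. Then for every vector (v_1,…,v_n) ∈ K^n there exists a symmetric polynomial p in m variables over K with p(k_{i1},…,k_{im}) = v_i for all i = 1,…,n. -/
/-!
Two families related by no permutation are separated by some symmetric polynomial: the
coefficients of `∏ t, (T - X t)` are symmetric in the `X t`, and their values at a family `x` are
the coefficients of `∏ t, (T - x t)`, whose roots recover the multiset of the `x t`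
(`exists_isSymmetric_eval_ne`). Since symmetric polynomials form a subalgebra, Lagrange's
construction turns separation of pairs into interpolation: if `s i j` separates `k i` from `k j`,
then the product over `j ≠ i` of `(s i j - s i j (k j)) / (s i j (k i) - s i j (k j))` is `1` at
`k i` and `0` at every other `k j`.
-/

/-- The multiplicity of `c` in the multiset of values of a family is the size of its fibre over
`c`, so equal multisets give bijections between fibres, which glue to a permutation. -/
theorem exists_perm_of_map_univ_eq {K : Type*} {m : ℕ} (x y : Fin m → K)
    (h : Finset.univ.val.map x = Finset.univ.val.map y) :
    ∃ σ : Equiv.Perm (Fin m), ∀ t, x t = y (σ t) := by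
  classical
  have hcard (c : K) : Fintype.card {t // x t = c} = Fintype.card {t // y t = c} := by
    have hc := congrArg (Multiset.count c) h
    rw [Multiset.count_map, Multiset.count_map] at hc
    simp only [Fintype.card_subtype, Finset.card_def, Finset.filter_val]
    simpa only [eq_comm] using hc
  let e (c : K) : {t // x t = c} ≃ {t // y t = c} := Fintype.equivOfCardEq (hcard c)
  exact ⟨Equiv.ofFiberEquiv e, fun t => (Equiv.ofFiberEquiv_map e t).symm⟩

theorem isSymmetric_coeff_prod_X_sub (K : Type*) [Field K] (m d : ℕ) :
    ((∏ t : Fin m, (Polynomial.X - Polynomial.C (MvPolynomial.X t : MvPolynomial (Fin m) K))).coeff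
      d).IsSymmetric := by
  intro σ
  have h := Polynomial.coeff_map (p := ∏ t : Fin m, (Polynomial.X - Polynomial.C
    (MvPolynomial.X t : MvPolynomial (Fin m) K))) (MvPolynomial.rename σ).toRingHom d
  refine h.symm.trans ?_
  congr 1
  rw [Polynomial.map_prod]
  simp only [Polynomial.map_sub, Polynomial.map_X, Polynomial.map_C, AlgHom.toRingHom_eq_coe,
    RingHom.coe_coe, MvPolynomial.rename_X]
  exact Equiv.prod_comp σ
    fun t => Polynomial.X - Polynomial.C (MvPolynomial.X t : MvPolynomial (Fin m) K)

theorem exists_isSymmetric_eval_ne {K : Type*} [Field K] {m : ℕ} (x y : Fin m → K)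
    (h : ¬ ∃ σ : Equiv.Perm (Fin m), ∀ t, x t = y (σ t)) :
    ∃ s : MvPolynomial (Fin m) K, s.IsSymmetric ∧
      MvPolynomial.eval x s ≠ MvPolynomial.eval y s := by
  by_contra! hs
  apply h
  have hp : ∏ t, (Polynomial.X - Polynomial.C (x t)) =
      ∏ t, (Polynomial.X - Polynomial.C (y t)) := by
    ext d
    have := hs _ (isSymmetric_coeff_prod_X_sub K m d)
    simpa only [← Polynomial.coeff_map, Polynomial.map_prod, Polynomial.map_sub,
      Polynomial.map_X, Polynomial.map_C, MvPolynomial.eval_X] using this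
  have hroots : ∀ z : Fin m → K, (∏ t, (Polynomial.X - Polynomial.C (z t))).roots =
      Finset.univ.val.map z := fun z => by
    have := Polynomial.roots_multiset_prod_X_sub_C (Finset.univ.val.map z)
    rwa [Multiset.map_map] at this
  have hm : Finset.univ.val.map x = Finset.univ.val.map y := by
    rw [← hroots, ← hroots, hp]
  exact exists_perm_of_map_univ_eq x y hm

/-- If `n` families `k i : Fin m → K` are pairwise not related by a permutation, then for
every vector `v : Fin n → K` there is a symmetric polynomial `p` in `m` variables over `K`
with `p(k i) = v i` for all `i`. -/
theorem stmt5 (K : Type*) [Field K] (m n : ℕ) (k : Fin n → Fin m → K)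
    (hsep : ∀ i j : Fin n, i ≠ j →
      ¬ ∃ σ : Equiv.Perm (Fin m), ∀ t, k i t = k j (σ t)) :
    ∀ v : Fin n → K, ∃ p : MvPolynomial (Fin m) K, p.IsSymmetric ∧
      ∀ i, MvPolynomial.eval (k i) p = v i := by
  intro v
  choose! s hsym hne using fun i j hij => exists_isSymmetric_eval_ne (k i) (k j) (hsep i j hij)
  let e (i j l : Fin n) : K := MvPolynomial.eval (k l) (s i j)
  refine ⟨∑ i, MvPolynomial.C (v i) * ∏ j ∈ Finset.univ.erase i,
    (MvPolynomial.C (e i j i - e i j j)⁻¹ * (s i j - MvPolynomial.C (e i j j))), ?_, fun l => ?_⟩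
  · rw [← MvPolynomial.mem_symmetricSubalgebra]
    have hC (c : K) : MvPolynomial.C c ∈ MvPolynomial.symmetricSubalgebra (Fin m) K :=
      Subalgebra.algebraMap_mem _ c
    refine sum_mem fun i _ => mul_mem (hC _) (prod_mem fun j hj =>
      mul_mem (hC _) (sub_mem ?_ (hC _)))
    exact hsym i j (Finset.ne_of_mem_erase hj).symm
  · simp only [map_sum, map_mul, map_prod, map_sub, MvPolynomial.eval_C]
    rw [Finset.sum_eq_single l]
    · rw [Finset.prod_eq_one, mul_one]
      intro j hj
      exact inv_mul_cancel₀ (sub_ne_zero.2 (hne l j (Finset.ne_of_mem_erase hj).symm))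
    · intro i _ hi
      rw [Finset.prod_eq_zero (Finset.mem_erase.2 ⟨hi.symm, Finset.mem_univ l⟩), mul_zero]
      simp [e]
    · simp
end

section
/- Let λ and μ be two Young diagrams (equivalently, partitions). Then λ = μ if and only if the multiset of residues of the nodes of λ equals the multiset of residues of the nodes of μ, where the residue of a node in row i and column j is the integer j − i. -/
/-!
The nodes of residue `r` form a chain in `ℕ × ℕ` (a diagonal), and a Young diagram, being a lower
set, meets this chain in an initial segment. The multiplicity of `r` in the multiset of residues is
the length of that segment, so the multiset determines every diagonal and hence the diagram.
-/

/-- If a node of `lam` were missing from `mu`, the segment cut out by `mu` on the diagonal through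
that node would be properly contained in the one cut out by `lam`. -/
theorem le_of_residues_eq {lam mu : YoungDiagram}
    (h : Multiset.map (fun c : ℕ × ℕ => (c.2 : ℤ) - (c.1 : ℤ)) lam.cells.val =
        Multiset.map (fun c : ℕ × ℕ => (c.2 : ℤ) - (c.1 : ℤ)) mu.cells.val) :
    lam ≤ mu := by
  rintro ⟨i, j⟩ hl
  by_contra hm
  have hcard := congrArg (Multiset.count ((j : ℤ) - (i : ℤ))) h
  rw [Multiset.count_map, Multiset.count_map] at hcard
  change (lam.cells.filter fun c => (j : ℤ) - i = (c.2 : ℤ) - c.1).card =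
    (mu.cells.filter fun c => (j : ℤ) - i = (c.2 : ℤ) - c.1).card at hcard
  refine (Finset.card_lt_card (Finset.ssubset_iff_of_subset ?_ |>.2 ⟨(i, j), ?_, ?_⟩)).ne' hcard
  · rintro ⟨a, b⟩ hab
    simp only [Finset.mem_filter, YoungDiagram.mem_cells] at hab ⊢
    refine ⟨?_, hab.2⟩
    rcases le_total a i with hai | hia
    · exact lam.up_left_mem hai (by omega) hl
    · exact absurd (mu.up_left_mem hia (by omega) hab.1) hm
  · exact Finset.mem_filter.2 ⟨hl, rfl⟩
  · exact fun hmem => hm (Finset.mem_filter.1 hmem).1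

/-- Two Young diagrams are equal if and only if their multisets of residues coincide,
where the residue of a node in row `i` and column `j` is the integer `j - i`. -/
theorem stmt7 (lam mu : YoungDiagram) :
    lam = mu ↔
      Multiset.map (fun c : ℕ × ℕ => (c.2 : ℤ) - (c.1 : ℤ)) lam.cells.val =
        Multiset.map (fun c : ℕ × ℕ => (c.2 : ℤ) - (c.1 : ℤ)) mu.cells.val := by
  constructor
  · rintro rfl
    rfl
  · exact fun h => le_antisymm (le_of_residues_eq h) (le_of_residues_eq h.symm)
end
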